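/- arXiv:2305.19934 — 5 statements merged into one kernel-verified Lean document; each statement's English description precedes it below -/
import Mathlib

section
/- Let Ω ⊂ ℝ^d be a bounded open set and W : Ω×ℝ^{m×d} → [0,+∞] be jointly measurable and convex in the second variable. Assume there exists θ > 0 such that x ↦ sup_{|ξ|≤θ} W(x,ξ) belongs to L¹(Ω). Let g ∈ W^{1,p}(Ω)^m be such that ∫_Ω W(x, s Dg(x)) dx < +∞ for some s > 1. Then there exists r > 0 such that x ↦ sup_{|ξ|≤r} W(x, Dg(x)+ξ) belongs to L¹(Ω). In particular, for a.e. x ∈ Ω the map ξ ↦ W(x,ξ) is continuous at ξ = Dg(x). -/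
open MeasureTheory Metric Set Filter
open scoped ENNReal Topology NNReal RealInnerProductSpace

noncomputable section

/-- `ℝ^d` as a Euclidean space. -/
abbrev Euc (d : ℕ) := EuclideanSpace ℝ (Fin d)

/-- The space `ℝ^{m×d}` of `m×d` matrices. -/
abbrev Mat (m d : ℕ) := Fin m → Fin d → ℝ

/-- Frobenius (Euclidean) norm of an `m×d` matrix. -/
def frobNorm {m d : ℕ} (ξ : Mat m d) : ℝ :=
  Real.sqrt (∑ i, ∑ j, ξ i j ^ 2)

/-- `φ ∈ C_c^∞(Ω)^m`: a smooth function with compact support contained in `Ω`. -/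
def IsCcSmooth {d m : ℕ} (Ω : Set (Euc d)) (φ : Euc d → Euc m) : Prop :=
  ContDiff ℝ (⊤ : ℕ∞) φ ∧ HasCompactSupport φ ∧ tsupport φ ⊆ Ω

/-- The (classical) Jacobian matrix of a differentiable map. -/
def smoothJac {d m : ℕ} (φ : Euc d → Euc m) (x : Euc d) : Mat m d :=
  fun i j => fderiv ℝ φ x (EuclideanSpace.single j 1) i

/-- `Du` is the weak Jacobian of `u` on `Ω` (integration by parts against test functions). -/
def IsWeakJacobianOn {d m : ℕ} (Ω : Set (Euc d)) (u : Euc d → Euc m)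
    (Du : Euc d → Mat m d) : Prop :=
  ∀ φ : Euc d → ℝ, ContDiff ℝ (⊤ : ℕ∞) φ → HasCompactSupport φ → tsupport φ ⊆ Ω →
    ∀ (i : Fin m) (j : Fin d),
      ∫ x in Ω, u x i * fderiv ℝ φ x (EuclideanSpace.single j 1) =
        - ∫ x in Ω, Du x i j * φ x

/-- `u ∈ W^{1,p}(Ω)^m` with weak Jacobian `Du`. -/
def MemW1p {d m : ℕ} (Ω : Set (Euc d)) (p : ℝ≥0∞) (u : Euc d → Euc m)
    (Du : Euc d → Mat m d) : Prop :=
  MemLp u p (volume.restrict Ω) ∧ MemLp Du p (volume.restrict Ω) ∧ IsWeakJacobianOn Ω u Du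

/-- Strong convergence `uₙ → v` in `W^{1,p}(Ω)^m` (together with the Jacobians). -/
def TendstoW1p {d m : ℕ} (Ω : Set (Euc d)) (p : ℝ≥0∞)
    (u : ℕ → Euc d → Euc m) (Du : ℕ → Euc d → Mat m d)
    (v : Euc d → Euc m) (Dv : Euc d → Mat m d) : Prop :=
  Tendsto (fun n => eLpNorm (u n - v) p (volume.restrict Ω)) atTop (𝓝 0) ∧
  Tendsto (fun n => eLpNorm (Du n - Dv) p (volume.restrict Ω)) atTop (𝓝 0)

/-- `v ∈ W_0^{1,p}(Ω)^m`, i.e. `v ∈ W^{1,p}` and `v` is a `W^{1,p}`-limit of functions in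
`C_c^∞(Ω)^m`. -/
def MemW1p0 {d m : ℕ} (Ω : Set (Euc d)) (p : ℝ≥0∞) (v : Euc d → Euc m)
    (Dv : Euc d → Mat m d) : Prop :=
  MemW1p Ω p v Dv ∧
  ∃ w : ℕ → Euc d → Euc m, (∀ n, IsCcSmooth Ω (w n)) ∧
    TendstoW1p Ω p w (fun n => smoothJac (w n)) v Dv

/-- `Ω` has Lipschitz boundary: near each boundary point, `Ω` is the subgraph of a Lipschitz
function over a hyperplane. -/
def HasLipschitzBoundary {d : ℕ} (Ω : Set (Euc d)) : Prop :=
  ∀ x ∈ frontier Ω, ∃ (ν : Euc d) (r L : ℝ) (ψ : Euc d → ℝ),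
    ‖ν‖ = 1 ∧ 0 < r ∧ 0 ≤ L ∧ LipschitzWith (Real.toNNReal L) ψ ∧
    ∀ y ∈ ball x r, (y ∈ Ω ↔ ⟪y, ν⟫ < ψ (y - ⟪y, ν⟫ • ν))

/-- Convexity of a `[0,+∞]`-valued function. -/
def ConvexENNReal {m d : ℕ} (f : Mat m d → ℝ≥0∞) : Prop :=
  ∀ ξ η : Mat m d, ∀ t : ℝ, 0 ≤ t → t ≤ 1 →
    f (t • ξ + (1 - t) • η) ≤ ENNReal.ofReal t * f ξ + ENNReal.ofReal (1 - t) * f η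

/-- The convex biconjugate `f**` of a `[0,+∞]`-valued function: the supremum of all affine
minorants of `f`. -/
def biconj {m d : ℕ} (f : Mat m d → ℝ≥0∞) (ξ : Mat m d) : ℝ≥0∞ :=
  ⨆ (L : Mat m d →ₗ[ℝ] ℝ) (c : ℝ) (_ : ∀ η, ENNReal.ofReal (L η + c) ≤ f η),
    ENNReal.ofReal (L ξ + c)

/-- Assumption (a4): the local stability estimate
`W(x,ξ) ≤ C_M (ess inf_{y ∈ B̄_δ(x) ∩ Ω} W(y,·))**(ξ) + α_M(x)` for `|ξ| ≤ M δ^{-d/p}`. -/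
def StabilityEstimate {d m : ℕ} (Ω : Set (Euc d)) (p : ℝ)
    (W : Euc d → Mat m d → ℝ≥0∞) : Prop :=
  ∀ M : ℝ, 1 < M → ∃ (CM δ₀ : ℝ) (αM : Euc d → ℝ≥0∞),
    0 < CM ∧ 0 < δ₀ ∧ (∫⁻ x in Ω, αM x) < ⊤ ∧
    ∀ δ : ℝ, 0 < δ → δ < δ₀ → ∀ x ∈ Ω, ∀ ξ : Mat m d,
      frobNorm ξ ≤ M * δ ^ (-(d : ℝ) / p) →
      W x ξ ≤ ENNReal.ofReal CM *
          biconj (fun η => essInf (fun y => W y η) (volume.restrict (closedBall x δ ∩ Ω))) ξ +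
        αM x

/-- Assumption 1 of the paper (items (a1)–(a4)) for the integrand `W` on `Ω`, with lower
growth exponent `p`. -/
def Assumption1 {d m : ℕ} (Ω : Set (Euc d)) (p : ℝ) (W : Euc d → Mat m d → ℝ≥0∞) : Prop :=
  Measurable (Function.uncurry W) ∧
  (∀ᵐ x ∂volume.restrict Ω, ConvexENNReal (W x) ∧ LowerSemicontinuous (W x)) ∧
  (∀ᵐ x ∂volume.restrict Ω, ∀ ξ, ENNReal.ofReal (frobNorm ξ ^ p) ≤ W x ξ) ∧
  ((p ≤ (d : ℝ) - 1 →
      ∃ (C q : ℝ) (α : Euc d → ℝ≥0∞), 0 < C ∧ p < q ∧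
        (p < (d : ℝ) - 1 → q ≤ ((d : ℝ) - 1) * p / ((d : ℝ) - 1 - p)) ∧
        (∫⁻ x in Ω, α x) < ⊤ ∧
        ∀ᵐ x ∂volume.restrict Ω, ∀ ξ,
          W x ξ ≤ ENNReal.ofReal (C * frobNorm ξ ^ q) + α x) ∧
    ((d : ℝ) - 1 < p →
      ∃ θ : ℝ, 0 < θ ∧
        (∫⁻ x in Ω, ⨆ ξ ∈ {ξ : Mat m d | frobNorm ξ ≤ θ}, W x ξ) < ⊤)) ∧
  StabilityEstimate Ω p W

/-! Write `Dg = s⁻¹ • (s • Dg) + (1 - s⁻¹) • 0`. Convexity bounds `W(x, Dg + (1 - s⁻¹)η)` by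
`s⁻¹ W(x, s Dg) + (1 - s⁻¹) W(x, η)`, and the supremum over `|η| ≤ θ` is integrable. For almost
every `x` the convex set `{W(x, ·) < ∞}` contains `s Dg(x)` and the finitely many vertices of a
simplex around `0`, hence has `Dg(x)` in its interior, where a convex function is continuous. -/

section ConvexENNRealValued

variable {E : Type*} {f : E → ℝ≥0∞}

theorem ennreal_map_combo_le [AddCommMonoid E] [Module ℝ E] (hf : ConvexOn ℝ≥0 univ f)
    {a b : ℝ} (ha : 0 ≤ a) (hb : 0 ≤ b) (hab : a + b = 1) (x y : E) :
    f (a • x + b • y) ≤ ENNReal.ofReal a * f x + ENNReal.ofReal b * f y := by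
  lift a to ℝ≥0 using ha
  lift b to ℝ≥0 using hb
  rw [ENNReal.ofReal_coe_nnreal, ENNReal.ofReal_coe_nnreal]
  exact hf.2 (mem_univ x) (mem_univ y) a.2 b.2 (mod_cast hab)

theorem convex_setOf_ne_top [AddCommMonoid E] [Module ℝ E] (hf : ConvexOn ℝ≥0 univ f) :
    Convex ℝ {x | f x ≠ ⊤} :=
  fun x hx y hy _ _ ha hb hab => ne_top_of_le_ne_top
    (ENNReal.add_ne_top.2 ⟨ENNReal.mul_ne_top ENNReal.ofReal_ne_top hx,
      ENNReal.mul_ne_top ENNReal.ofReal_ne_top hy⟩)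
    (ennreal_map_combo_le hf ha hb hab x y)

theorem convexOn_toReal [AddCommMonoid E] [Module ℝ E] (hf : ConvexOn ℝ≥0 univ f) :
    ConvexOn ℝ {x | f x ≠ ⊤} fun x => (f x).toReal := by
  refine ⟨convex_setOf_ne_top hf, fun x hx y hy a b ha hb hab => ?_⟩
  have hax : ENNReal.ofReal a * f x ≠ ⊤ := ENNReal.mul_ne_top ENNReal.ofReal_ne_top hx
  have hby : ENNReal.ofReal b * f y ≠ ⊤ := ENNReal.mul_ne_top ENNReal.ofReal_ne_top hy
  calc (f (a • x + b • y)).toReal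
      ≤ (ENNReal.ofReal a * f x + ENNReal.ofReal b * f y).toReal :=
        ENNReal.toReal_mono (ENNReal.add_ne_top.2 ⟨hax, hby⟩)
          (ennreal_map_combo_le hf ha hb hab x y)
    _ = a • (f x).toReal + b • (f y).toReal := by
        rw [ENNReal.toReal_add hax hby, ENNReal.toReal_mul, ENNReal.toReal_mul,
          ENNReal.toReal_ofReal ha, ENNReal.toReal_ofReal hb, smul_eq_mul, smul_eq_mul]

theorem continuousAt_of_convexOn_of_mem_interior [NormedAddCommGroup E] [NormedSpace ℝ E]
    [FiniteDimensional ℝ E] (hf : ConvexOn ℝ≥0 univ f) {x : E}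
    (hx : x ∈ interior {y | f y ≠ ⊤}) : ContinuousAt f x := by
  have hreal : ContinuousAt (fun y => (f y).toReal) x :=
    (convexOn_toReal hf).continuousOn_interior.continuousAt (isOpen_interior.mem_nhds hx)
  refine (ENNReal.continuous_ofReal.continuousAt.comp hreal).congr ?_
  filter_upwards [mem_interior_iff_mem_nhds.1 hx] with y hy using ENNReal.ofReal_toReal hy

end ConvexENNRealValued

section Integrands

open scoped Pointwise

variable {X E : Type*} [MeasurableSpace X] {μ : Measure X} {W : X → E → ℝ≥0∞} {K : Set E}

theorem lintegral_iSup_combo_le [AddCommMonoid E] [Module ℝ E]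
    (hconv : ∀ᵐ x ∂μ, ConvexOn ℝ≥0 univ (W x)) {G : X → E}
    (hG : AEMeasurable (fun x => W x (G x)) μ)
    {a b : ℝ} (ha : 0 ≤ a) (hb : 0 ≤ b) (hab : a + b = 1) :
    ∫⁻ x, ⨆ ξ ∈ b • K, W x (a • G x + ξ) ∂μ ≤
      ENNReal.ofReal a * ∫⁻ x, W x (G x) ∂μ +
        ENNReal.ofReal b * ∫⁻ x, ⨆ ξ ∈ K, W x ξ ∂μ := by
  rw [← lintegral_const_mul' _ _ ENNReal.ofReal_ne_top,
    ← lintegral_const_mul' _ _ ENNReal.ofReal_ne_top, ← lintegral_add_left' (hG.const_mul _)]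
  refine lintegral_mono_ae ?_
  filter_upwards [hconv] with x hx
  refine iSup₂_le ?_
  rintro _ ⟨ξ, hξ, rfl⟩
  refine (ennreal_map_combo_le hx ha hb hab (G x) ξ).trans ?_
  gcongr
  exact le_iSup₂ (f := fun ξ _ => W x ξ) ξ hξ

theorem ae_ne_top_of_lintegral_iSup_lt_top (hW : ∀ ξ ∈ K, AEMeasurable (fun x => W x ξ) μ)
    (hsup : ∫⁻ x, ⨆ ξ ∈ K, W x ξ ∂μ < ⊤) : ∀ ξ ∈ K, ∀ᵐ x ∂μ, W x ξ ≠ ⊤ := by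
  intro ξ hξ
  have hle : ∫⁻ x, W x ξ ∂μ ≤ ∫⁻ x, ⨆ ξ ∈ K, W x ξ ∂μ :=
    lintegral_mono fun x => le_iSup₂ (f := fun ξ _ => W x ξ) ξ hξ
  filter_upwards [ae_lt_top' (hW ξ hξ) (hle.trans_lt hsup).ne] with x hx using hx.ne

variable [NormedAddCommGroup E] [NormedSpace ℝ E] [FiniteDimensional ℝ E]

theorem ae_mem_interior_setOf_ne_top (hconv : ∀ᵐ x ∂μ, ConvexOn ℝ≥0 univ (W x)) {ξ₀ : E}
    (hK : K ∈ 𝓝 ξ₀) (hfin : ∀ ξ ∈ K, ∀ᵐ x ∂μ, W x ξ ≠ ⊤) :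
    ∀ᵐ x ∂μ, ξ₀ ∈ interior {ξ | W x ξ ≠ ⊤} := by
  obtain ⟨b, hb, hbK⟩ := exists_mem_interior_convexHull_affineBasis hK
  have hvertices : ∀ᵐ x ∂μ, ∀ i, W x (b i) ≠ ⊤ :=
    ae_all_iff.2 fun i => hfin (b i) (hbK (subset_convexHull ℝ _ (mem_range_self i)))
  filter_upwards [hconv, hvertices] with x hx hbx
  exact interior_mono
    (convexHull_min (range_subset_iff.2 hbx) (convex_setOf_ne_top hx)) hb

theorem integrable_sup_around_gradient_general [MeasurableSpace E] [BorelSpace E]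
    (hWmeas : Measurable (Function.uncurry W)) (hconv : ∀ᵐ x ∂μ, ConvexOn ℝ≥0 univ (W x))
    (hK : K ∈ 𝓝 0) (hsup : ∫⁻ x, ⨆ ξ ∈ K, W x ξ ∂μ < ⊤)
    {F : X → E} (hF : AEMeasurable F μ)
    {s : ℝ} (hs : 1 < s) (hFW : ∫⁻ x, W x (s • F x) ∂μ < ⊤) :
    ∫⁻ x, ⨆ ξ ∈ (1 - s⁻¹) • K, W x (F x + ξ) ∂μ < ⊤ ∧
      ∀ᵐ x ∂μ, ContinuousAt (W x) (F x) := by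
  have hs₀ : 0 < s := one_pos.trans hs
  have hinv : 0 < 1 - s⁻¹ := sub_pos.2 (inv_lt_one_of_one_lt₀ hs)
  have hmeas : AEMeasurable (fun x => W x (s • F x)) μ :=
    hWmeas.comp_aemeasurable (aemeasurable_id.prodMk (hF.const_smul s))
  constructor
  · have hle := lintegral_iSup_combo_le (K := K) hconv hmeas (inv_pos.2 hs₀).le hinv.le
      (add_sub_cancel _ _)
    simp only [inv_smul_smul₀ hs₀.ne'] at hle
    exact hle.trans_lt (ENNReal.add_lt_top.2 ⟨ENNReal.mul_lt_top ENNReal.ofReal_lt_top hFW,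
      ENNReal.mul_lt_top ENNReal.ofReal_lt_top hsup⟩)
  · have hfin := ae_ne_top_of_lintegral_iSup_lt_top
      (fun ξ _ => hWmeas.of_uncurry_right.aemeasurable) hsup
    filter_upwards [hconv, ae_mem_interior_setOf_ne_top hconv hK hfin,
      ae_lt_top' hmeas hFW.ne] with x hx h₀ hsF
    have hcombo := (convex_setOf_ne_top hx).combo_self_interior_mem_interior hsF.ne h₀
      (inv_pos.2 hs₀).le hinv (add_sub_cancel _ _)
    rw [inv_smul_smul₀ hs₀.ne', smul_zero, add_zero] at hcombo
    exact continuousAt_of_convexOn_of_mem_interior hx hcombo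

end Integrands

section Matrices

open scoped Pointwise

variable {m d : ℕ}

theorem ConvexENNReal.convexOn {f : Mat m d → ℝ≥0∞} (hf : ConvexENNReal f) :
    ConvexOn ℝ≥0 univ f := by
  refine ⟨convex_univ, fun ξ _ η _ a b _ _ hab => ?_⟩
  have hab' : (a : ℝ) + b = 1 := mod_cast hab
  have h := hf ξ η a a.2 (by linarith [b.2])
  rw [← eq_sub_of_add_eq' hab', ENNReal.ofReal_coe_nnreal, ENNReal.ofReal_coe_nnreal] at h
  exact h

theorem continuous_frobNorm : Continuous (frobNorm : Mat m d → ℝ) := by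
  unfold frobNorm
  fun_prop

theorem frobNorm_smul (c : ℝ) (ξ : Mat m d) : frobNorm (c • ξ) = |c| * frobNorm ξ := by
  simp only [frobNorm, Pi.smul_apply, smul_eq_mul, mul_pow, ← Finset.mul_sum,
    Real.sqrt_mul (sq_nonneg c), Real.sqrt_sq_eq_abs]

theorem setOf_frobNorm_le_mem_nhds_zero {θ : ℝ} (hθ : 0 < θ) :
    {ξ : Mat m d | frobNorm ξ ≤ θ} ∈ 𝓝 0 := by
  have hzero : frobNorm (0 : Mat m d) < θ := by simpa [frobNorm] using hθ
  exact continuous_frobNorm.continuousAt.eventually_le_const hzero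

theorem smul_setOf_frobNorm_le {c : ℝ} (hc : 0 < c) (θ : ℝ) :
    c • {ξ : Mat m d | frobNorm ξ ≤ θ} = {ξ | frobNorm ξ ≤ c * θ} := by
  ext ξ
  rw [mem_smul_set_iff_inv_smul_mem₀ hc.ne', mem_ofPred_eq, mem_ofPred_eq, frobNorm_smul,
    abs_of_pos (inv_pos.2 hc), inv_mul_le_iff₀ hc]

end Matrices

/-- **Lemma 3.3.** Let `Ω ⊂ ℝ^d` be a bounded open set and
`W : Ω × ℝ^{m×d} → [0,+∞]` jointly measurable and convex in the second variable. Assume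
`x ↦ sup_{|ξ|≤θ} W(x,ξ) ∈ L¹(Ω)` for some `θ > 0`, and let `g ∈ W^{1,p}(Ω)^m` satisfy
`∫_Ω W(x, s Dg) dx < ∞` for some `s > 1`. Then there is `r > 0` with
`x ↦ sup_{|ξ|≤r} W(x, Dg(x)+ξ) ∈ L¹(Ω)`; in particular for a.e. `x ∈ Ω` the map
`ξ ↦ W(x,ξ)` is continuous at `ξ = Dg(x)`. -/
theorem integrable_sup_around_gradient
    (d m : ℕ) (Ω : Set (Euc d)) (hΩo : IsOpen Ω) (hΩb : Bornology.IsBounded Ω)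
    (W : Euc d → Mat m d → ℝ≥0∞)
    (hWmeas : Measurable (Function.uncurry W))
    (hWconv : ∀ x ∈ Ω, ConvexENNReal (W x))
    (θ : ℝ) (hθ : 0 < θ)
    (hsup : (∫⁻ x in Ω, ⨆ ξ ∈ {ξ : Mat m d | frobNorm ξ ≤ θ}, W x ξ) < ⊤)
    (p : ℝ) (hp : 1 ≤ p)
    (g : Euc d → Euc m) (Dg : Euc d → Mat m d)
    (hg : MemW1p Ω (ENNReal.ofReal p) g Dg)
    (hgW : ∃ s : ℝ, 1 < s ∧ (∫⁻ x in Ω, W x (s • Dg x)) < ⊤) :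
    (∃ r : ℝ, 0 < r ∧
        (∫⁻ x in Ω, ⨆ ξ ∈ {ξ : Mat m d | frobNorm ξ ≤ r}, W x (Dg x + ξ)) < ⊤) ∧
    ∀ᵐ x ∂volume.restrict Ω, ContinuousAt (W x) (Dg x) := by
  obtain ⟨s, hs, hgs⟩ := hgW
  have hinv : 0 < 1 - s⁻¹ := sub_pos.2 (inv_lt_one_of_one_lt₀ hs)
  have hconv : ∀ᵐ x ∂volume.restrict Ω, ConvexOn ℝ≥0 univ (W x) :=
    ae_restrict_of_forall_mem hΩo.measurableSet fun x hx => (hWconv x hx).convexOn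
  have h := integrable_sup_around_gradient_general hWmeas hconv
    (setOf_frobNorm_le_mem_nhds_zero hθ) hsup hg.2.1.aemeasurable hs hgs
  rw [smul_setOf_frobNorm_le hinv] at h
  exact ⟨⟨(1 - s⁻¹) * θ, mul_pos hinv hθ, h.1⟩, h.2⟩

end
end

section
/- Let Ω ⊂ ℝ^d be a bounded open set that is locally strongly star-shaped. Then the boundary ∂Ω has d-dimensional Lebesgue measure zero. -/
open Set MeasureTheory

noncomputable section

/-- An open bounded set `Ω`, star-shaped with respect to `z ∈ Ω`, is strongly star-shaped
if the relative interior of each segment from `z` to a point of `∂Ω` is contained in `Ω`. -/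
def IsStronglyStarShapedWrt {d : ℕ} (Ω : Set (Euc d)) (z : Euc d) : Prop :=
  z ∈ Ω ∧ StarConvex ℝ z Ω ∧ ∀ x ∈ frontier Ω, openSegment ℝ z x ⊆ Ω

/-- A bounded open set is locally strongly star-shaped if each boundary point has an open
neighbourhood `O` such that `O ∩ Ω` is strongly star-shaped (with respect to some point). -/
def IsLocallyStronglyStarShaped {d : ℕ} (Ω : Set (Euc d)) : Prop :=
  ∀ x ∈ frontier Ω, ∃ O : Set (Euc d), IsOpen O ∧ x ∈ O ∧
    ∃ z : Euc d, IsStronglyStarShapedWrt (O ∩ Ω) z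

/-!
If `U` is strongly star-shaped with respect to `z`, the homothety of centre `z` and ratio
`r ∈ (0, 1)` maps `closure U` into `U`. Hence `r ^ d * μ (closure U) ≤ μ U`, and letting `r` tend
to `1` shows that `U` and `closure U` have the same measure. If `U` is open and of finite measure,
its boundary is therefore null. Intersecting with balls centred at `z` removes the finiteness
assumption, and being null is a local property.
-/

open Filter Topology AffineMap

section Topology

variable {E : Type*} [AddCommGroup E] [Module ℝ E] [TopologicalSpace E] {z : E} {s t : Set E}

/-- Strong star-shapedness of a set `s` with respect to a point `z`, in the form used for scaling
arguments. Asking for the open segments from `z` to all points of `closure s`, and not only to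
those of `frontier s`, makes a separate star-convexity clause superfluous. -/
def StronglyStarConvex (z : E) (s : Set E) : Prop :=
  ∀ x ∈ closure s, openSegment ℝ z x ⊆ s

theorem StronglyStarConvex.inter (hs : StronglyStarConvex z s) (ht : StronglyStarConvex z t) :
    StronglyStarConvex z (s ∩ t) := fun x hx =>
  have ⟨hxs, hxt⟩ := closure_inter_subset hx
  subset_inter (hs x hxs) (ht x hxt)

theorem StronglyStarConvex.of_convex [IsTopologicalAddGroup E] [ContinuousConstSMul ℝ E]
    (hs : Convex ℝ s) (hz : z ∈ interior s) : StronglyStarConvex z s := fun _ hx =>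
  (hs.openSegment_interior_closure_subset_interior hz hx).trans interior_subset

theorem StronglyStarConvex.image_homothety_closure_subset (hs : StronglyStarConvex z s) {r : ℝ}
    (hr : r ∈ Ioo (0 : ℝ) 1) : homothety z r '' closure s ⊆ s := by
  rintro _ ⟨x, hx, rfl⟩
  apply hs x hx
  rw [openSegment_eq_image_lineMap, homothety_eq_lineMap]
  exact mem_image_of_mem _ hr

end Topology

theorem measure_frontier_eq_zero_of_locally {X : Type*} [TopologicalSpace X]
    [SecondCountableTopology X] [MeasurableSpace X] {μ : Measure X} {s : Set X}
    (hs : ∀ x ∈ frontier s, ∃ O, IsOpen O ∧ x ∈ O ∧ μ (frontier (s ∩ O)) = 0) :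
    μ (frontier s) = 0 := by
  refine measure_null_of_locally_null _ fun x hx => ?_
  obtain ⟨O, hO, hxO, hnull⟩ := hs x hx
  refine ⟨frontier s ∩ O, inter_mem_nhdsWithin _ (hO.mem_nhds hxO), ?_⟩
  rw [← frontier_inter_open_inter hO]
  exact measure_mono_null inter_subset_left hnull

section Haar

variable {E : Type*} [NormedAddCommGroup E] [NormedSpace ℝ E] [FiniteDimensional ℝ E]
  [MeasurableSpace E] [BorelSpace E] (μ : Measure E) [μ.IsAddHaarMeasure] {z : E} {s : Set E}

theorem tendsto_addHaar_image_homothety (z : E) (s : Set E) :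
    Tendsto (fun r : ℝ => μ (homothety z r '' s)) (𝓝 1) (𝓝 (μ s)) := by
  have hratio : Tendsto (fun r : ℝ => ENNReal.ofReal |r ^ Module.finrank ℝ E|) (𝓝 1) (𝓝 1) := by
    refine (ENNReal.continuous_ofReal.comp (by fun_prop)).tendsto' _ _ ?_
    rw [Function.comp_apply, one_pow, abs_one, ENNReal.ofReal_one]
  simpa only [Measure.addHaar_image_homothety, one_mul] using
    ENNReal.Tendsto.mul_const hratio (Or.inl one_ne_zero)

theorem StronglyStarConvex.addHaar_closure (hs : StronglyStarConvex z s) :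
    μ (closure s) = μ s := by
  refine le_antisymm ?_ (measure_mono subset_closure)
  have hlim : Tendsto (fun r : ℝ => μ (homothety z r '' closure s)) (𝓝[<] 1) (𝓝 (μ (closure s))) :=
    (tendsto_addHaar_image_homothety μ z (closure s)).mono_left nhdsWithin_le_nhds
  refine le_of_tendsto hlim ?_
  filter_upwards [Ioo_mem_nhdsLT zero_lt_one] with r hr
  exact measure_mono (hs.image_homothety_closure_subset hr)

theorem StronglyStarConvex.addHaar_frontier_of_ne_top (hs : StronglyStarConvex z s)
    (hso : IsOpen s) (hfin : μ s ≠ ⊤) : μ (frontier s) = 0 := by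
  rw [hso.frontier_eq, measure_sdiff subset_closure hso.nullMeasurableSet hfin,
    hs.addHaar_closure μ, tsub_self]

theorem StronglyStarConvex.addHaar_frontier (hs : StronglyStarConvex z s) (hso : IsOpen s) :
    μ (frontier s) = 0 := by
  refine measure_frontier_eq_zero_of_locally fun x _ => ?_
  obtain ⟨R, hR⟩ : ∃ R, dist x z < R := exists_gt _
  have hzR : z ∈ Metric.ball z R := Metric.mem_ball_self (dist_nonneg.trans_lt hR)
  have hball : StronglyStarConvex z (Metric.ball z R) :=
    .of_convex (convex_ball z R) (by rwa [Metric.isOpen_ball.interior_eq])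
  have hfin : μ (s ∩ Metric.ball z R) ≠ ⊤ :=
    (Metric.isBounded_ball.subset inter_subset_right).measure_lt_top.ne
  exact ⟨Metric.ball z R, Metric.isOpen_ball, hR,
    (hs.inter hball).addHaar_frontier_of_ne_top μ (hso.inter Metric.isOpen_ball) hfin⟩

theorem boundary_null_of_locallyStronglyStarShaped_general (hso : IsOpen s)
    (hs : ∀ x ∈ frontier s, ∃ O, IsOpen O ∧ x ∈ O ∧ ∃ z, StronglyStarConvex z (O ∩ s)) :
    μ (frontier s) = 0 := by
  refine measure_frontier_eq_zero_of_locally fun x hx => ?_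
  obtain ⟨O, hO, hxO, z, hz⟩ := hs x hx
  rw [inter_comm] at hz
  exact ⟨O, hO, hxO, hz.addHaar_frontier μ (hso.inter hO)⟩

end Haar

theorem IsStronglyStarShapedWrt.stronglyStarConvex {d : ℕ} {U : Set (Euc d)} {z : Euc d}
    (h : IsStronglyStarShapedWrt U z) : StronglyStarConvex z U := by
  obtain ⟨-, hstar, hfrontier⟩ := h
  intro x hx
  by_cases hxU : x ∈ U
  · exact hstar.openSegment_subset hxU
  · exact hfrontier x ⟨hx, notMem_subset interior_subset hxU⟩

/-- **Lemma A.2.** A bounded open locally strongly star-shaped set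
`Ω ⊂ ℝ^d` has boundary of `d`-dimensional Lebesgue measure zero. -/
theorem boundary_null_of_locallyStronglyStarShaped
    (d : ℕ) (Ω : Set (Euc d)) (hΩo : IsOpen Ω) (hΩb : Bornology.IsBounded Ω)
    (hΩ : IsLocallyStronglyStarShaped Ω) :
    volume (frontier Ω) = 0 :=
  boundary_null_of_locallyStronglyStarShaped_general volume hΩo fun x hx =>
    have ⟨O, hO, hxO, z, hz⟩ := hΩ x hx
    ⟨O, hO, hxO, z, hz.stronglyStarConvex⟩

end
end

section
/- Let A ⊂ ℝ^d be a Lebesgue-measurable set such that the dilates (sA)_{s>0} are pairwise disjoint (i.e. sA ∩ tA = ∅ whenever 0 < s < t). Then A has d-dimensional Lebesgue measure zero. -/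
open Set MeasureTheory
open scoped Pointwise

open scoped Function

/-!
Dilating by `s ≠ 0` multiplies Haar measure by a nonzero factor. If `A` had positive measure, so
would uncountably many pairwise disjoint dilates of it, which a σ-finite measure does not allow.
-/

theorem exists_measure_eq_zero_of_pairwise_aedisjoint {α ι : Type*} [Uncountable ι]
    [MeasurableSpace α] {μ : Measure α} [SFinite μ] {As : ι → Set α}
    (hAs : ∀ i, NullMeasurableSet (As i) μ) (hdisj : Pairwise (AEDisjoint μ on As)) :
    ∃ i, μ (As i) = 0 := by
  by_contra! hpos
  have hcount : {i | 0 < μ (As i)}.Countable :=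
    Measure.countable_meas_pos_of_disjoint_iUnion₀ hAs hdisj
  have huniv : {i | 0 < μ (As i)} = univ :=
    eq_univ_of_forall fun i => pos_iff_ne_zero.2 (hpos i)
  exact not_countable_univ (huniv ▸ hcount)

theorem not_countable_Ioi_real (a : ℝ) : ¬ (Ioi a).Countable := fun h => by
  simpa only [Real.volume_Ioi, ENNReal.top_ne_zero] using h.measure_zero volume

section AddHaar

variable {E : Type*} [NormedAddCommGroup E] [NormedSpace ℝ E] [FiniteDimensional ℝ E]
  [MeasurableSpace E] [BorelSpace E] {μ : Measure E} [μ.IsAddHaarMeasure]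

theorem addHaar_smul_eq_zero_iff {r : ℝ} (hr : r ≠ 0) {A : Set E} :
    μ (r • A) = 0 ↔ μ A = 0 := by
  rw [Measure.addHaar_smul, mul_eq_zero, or_iff_right]
  exact (ENNReal.ofReal_pos.2 (abs_pos.2 (pow_ne_zero _ hr))).ne'

theorem measure_zero_of_dilates_disjoint_general {A : Set E} (hA : NullMeasurableSet A μ)
    {S : Set ℝ} (hS : ¬ S.Countable) (hdisj : S.Pairwise (AEDisjoint μ on fun s : ℝ => s • A)) :
    μ A = 0 := by
  have hS₀ : ¬ (S \ {0}).Countable := fun h => hS (h.of_sdiff (countable_singleton 0))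
  have : Uncountable ↥(S \ {0}) := not_countable_iff.1 hS₀
  obtain ⟨s, hs⟩ : ∃ s : ↥(S \ {0}), μ ((s : ℝ) • A) = 0 :=
    exists_measure_eq_zero_of_pairwise_aedisjoint
      (fun s => Measure.NullMeasurableSet.const_smul hA s)
      (hdisj.mono sdiff_subset).subtype
  exact (addHaar_smul_eq_zero_iff s.2.2).1 hs

end AddHaar

/-- If `A ⊂ ℝ^d` is Lebesgue-measurable and its dilates `(sA)_{s>0}` are
pairwise disjoint, then `A` has `d`-dimensional Lebesgue measure zero. -/
theorem measure_zero_of_dilates_disjoint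
    (d : ℕ) (A : Set (EuclideanSpace ℝ (Fin d))) (hA : MeasurableSet A)
    (hdisj : ∀ s t : ℝ, 0 < s → s < t → Disjoint (s • A) (t • A)) :
    volume A = 0 := by
  have hpairwise : Pairwise (Disjoint on fun s : Ioi (0 : ℝ) => (s : ℝ) • A) :=
    (pairwise_disjoint_on _).2 fun s t => hdisj s t s.2
  exact measure_zero_of_dilates_disjoint_general hA.nullMeasurableSet (not_countable_Ioi_real 0)
    (hpairwise.mono fun _ _ => Disjoint.aedisjoint).set_of_subtype
end

section
/- Let q ∈ (0,1) and set x_* := (1/q)^{1/q} (so that x_*^q = 1/q). Define the line t_q(s) := exp(x_*^q) · q · x_*^{q−1} · s. Then t_q(s) ≤ exp(s^q) for all s ≥ 0, with equality at s = x_*. -/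
/-!
The inequality `u ≤ exp (u - 1)` at `u = y ^ q`, raised to the power `1 / q`, gives
`y ≤ exp ((y ^ q - 1) / q)`. If `x ^ q = 1 / q`, then the tangent line at `x` is
`s ↦ exp (x ^ q) * (s / x)`, and for `y = s / x` the exponent above is `s ^ q - x ^ q`.
-/

open Real

theorem le_exp_rpow_sub_one_div {q y : ℝ} (hq : 0 < q) (hy : 0 ≤ y) :
    y ≤ exp ((y ^ q - 1) / q) :=
  calc
    y = (y ^ q) ^ q⁻¹ := (rpow_rpow_inv hy hq.ne').symm
    _ ≤ exp (y ^ q - 1) ^ q⁻¹ := by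
      gcongr
      simpa only [sub_add_cancel] using add_one_le_exp (y ^ q - 1)
    _ = exp ((y ^ q - 1) / q) := by rw [← exp_mul, div_eq_mul_inv]

section TangencyPoint

variable {q x : ℝ}

theorem pos_of_rpow_eq_one_div (hx : 0 < x) (hxq : x ^ q = 1 / q) : 0 < q :=
  one_div_pos.mp (hxq ▸ rpow_pos_of_pos hx q)

theorem mul_rpow_sub_one_eq_inv (hx : 0 < x) (hxq : x ^ q = 1 / q) :
    q * x ^ (q - 1) = x⁻¹ := by
  have hq : 0 < q := pos_of_rpow_eq_one_div hx hxq
  rw [rpow_sub_one hx.ne', hxq]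
  field_simp

theorem tangent_line_self_of_rpow_eq_one_div (hx : 0 < x) (hxq : x ^ q = 1 / q) :
    exp (x ^ q) * q * x ^ (q - 1) * x = exp (x ^ q) := by
  rw [mul_assoc (exp _), mul_rpow_sub_one_eq_inv hx hxq, inv_mul_cancel_right₀ hx.ne']

theorem rpow_div_sub_one_div_eq_sub {s : ℝ} (hx : 0 < x) (hxq : x ^ q = 1 / q) (hs : 0 ≤ s) :
    ((s / x) ^ q - 1) / q = s ^ q - x ^ q := by
  have hq : 0 < q := pos_of_rpow_eq_one_div hx hxq
  rw [div_rpow hs hx.le, hxq]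
  field_simp

theorem tangent_line_le_exp_rpow_of_rpow_eq_one_div {s : ℝ} (hx : 0 < x) (hxq : x ^ q = 1 / q)
    (hs : 0 ≤ s) : exp (x ^ q) * q * x ^ (q - 1) * s ≤ exp (s ^ q) := by
  have hq : 0 < q := pos_of_rpow_eq_one_div hx hxq
  have ratio_le : s / x ≤ exp (s ^ q - x ^ q) := by
    simpa only [rpow_div_sub_one_div_eq_sub hx hxq hs] using
      le_exp_rpow_sub_one_div hq (div_nonneg hs hx.le)
  calc
    exp (x ^ q) * q * x ^ (q - 1) * s = exp (x ^ q) * (s / x) := by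
      rw [mul_assoc (exp _), mul_rpow_sub_one_eq_inv hx hxq, mul_assoc, inv_mul_eq_div]
    _ ≤ exp (x ^ q) * exp (s ^ q - x ^ q) := by gcongr
    _ = exp (s ^ q) := by rw [← exp_add, add_sub_cancel]

end TangencyPoint

theorem tangent_line_le_exp_rpow_general (q : ℝ) (hq : 0 < q) :
    (∀ s : ℝ, 0 ≤ s →
      Real.exp (((1 / q) ^ (1 / q) : ℝ) ^ q) * q * ((1 / q) ^ (1 / q) : ℝ) ^ (q - 1) * s ≤
        Real.exp (s ^ q)) ∧
    Real.exp (((1 / q) ^ (1 / q) : ℝ) ^ q) * q * ((1 / q) ^ (1 / q) : ℝ) ^ (q - 1) *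
        ((1 / q) ^ (1 / q) : ℝ) =
      Real.exp (((1 / q) ^ (1 / q) : ℝ) ^ q) := by
  have hx : (0 : ℝ) < (1 / q) ^ (1 / q) := by positivity
  have hxq : ((1 / q) ^ (1 / q) : ℝ) ^ q = 1 / q := by
    rw [one_div, rpow_inv_rpow (inv_pos.mpr hq).le hq.ne']
  exact ⟨fun _ hs => tangent_line_le_exp_rpow_of_rpow_eq_one_div hx hxq hs,
    tangent_line_self_of_rpow_eq_one_div hx hxq⟩

/-- For `q ∈ (0,1)` let `x_* := (1/q)^{1/q}` (so `x_*^q = 1/q`) and let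
`t_q(s) := exp(x_*^q) · q · x_*^{q−1} · s` be the tangent line through the origin. Then
`t_q(s) ≤ exp(s^q)` for all `s ≥ 0`, with equality at `s = x_*`. -/
theorem tangent_line_le_exp_rpow (q : ℝ) (hq0 : 0 < q) (hq1 : q < 1) :
    (∀ s : ℝ, 0 ≤ s →
      Real.exp (((1 / q) ^ (1 / q) : ℝ) ^ q) * q * ((1 / q) ^ (1 / q) : ℝ) ^ (q - 1) * s ≤
        Real.exp (s ^ q)) ∧
    Real.exp (((1 / q) ^ (1 / q) : ℝ) ^ q) * q * ((1 / q) ^ (1 / q) : ℝ) ^ (q - 1) *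
        ((1 / q) ^ (1 / q) : ℝ) =
      Real.exp (((1 / q) ^ (1 / q) : ℝ) ^ q) :=
  tangent_line_le_exp_rpow_general q hq0
end

section
/- Let α > 0 and define a(s) := exp(−s^{−α}) for s > 0. Then there exists a constant C depending only on α (one may take C = exp(α)) such that for all δ ∈ (0, 1/2] and all x₁ > 2 δ^{1/(α+1)}: a(x₁) ≤ C · a(x₁ − δ). -/
/-!
The function `s ↦ s ^ (-α)` is convex, so it lies above its tangent at `y = x₁ - δ`. Hence
`y ^ (-α) - x₁ ^ (-α) ≤ α * δ / y ^ (α + 1)`, and the right-hand side is at most `α` as soon as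
`δ ^ (1 / (α + 1)) ≤ y`.
-/

theorem one_add_mul_self_le_rpow_one_add_of_nonpos {s p : ℝ} (hs : -1 < s) (hp : p ≤ 0) :
    1 + p * s ≤ (1 + s) ^ p := by
  have hs' : 0 < 1 + s := by linarith
  have hlog : Real.log (1 + s) ≤ s := by linarith [Real.log_le_sub_one_of_pos hs']
  calc 1 + p * s ≤ Real.log (1 + s) * p + 1 := by
        linarith [mul_le_mul_of_nonpos_right hlog hp]
    _ ≤ Real.exp (Real.log (1 + s) * p) := Real.add_one_le_exp _
    _ = (1 + s) ^ p := (Real.rpow_def_of_pos hs' p).symm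

theorem rpow_add_mul_sub_le_rpow_of_nonpos {x y p : ℝ} (hx : 0 < x) (hy : 0 < y) (hp : p ≤ 0) :
    y ^ p + p * y ^ (p - 1) * (x - y) ≤ x ^ p := by
  have hratio : 1 + (x - y) / y = x / y := by field_simp; ring
  have hbernoulli : 1 + p * ((x - y) / y) ≤ (x / y) ^ p := by
    rw [← hratio]
    exact one_add_mul_self_le_rpow_one_add_of_nonpos
      (by linarith [div_pos hx hy]) hp
  calc y ^ p + p * y ^ (p - 1) * (x - y) = (1 + p * ((x - y) / y)) * y ^ p := by
        rw [Real.rpow_sub_one hy.ne']; ring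
    _ ≤ (x / y) ^ p * y ^ p := by gcongr
    _ = x ^ p := by
        rw [← Real.mul_rpow (div_pos hx hy).le hy.le, div_mul_cancel₀ _ hy.ne']

theorem exp_neg_rpow_neg_le_exp_mul_exp_neg_rpow_neg {x y α : ℝ} (hx : 0 < x) (hy : 0 < y)
    (hα : 0 ≤ α) :
    Real.exp (-x ^ (-α)) ≤ Real.exp (α * ((x - y) / y ^ (α + 1))) * Real.exp (-y ^ (-α)) := by
  have htangent : y ^ (-α) + -α * y ^ (-α - 1) * (x - y) ≤ x ^ (-α) :=
    rpow_add_mul_sub_le_rpow_of_nonpos hx hy (neg_nonpos.mpr hα)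
  have hslope : α * ((x - y) / y ^ (α + 1)) = α * y ^ (-α - 1) * (x - y) := by
    rw [← neg_add', Real.rpow_neg hy.le]; ring
  rw [← Real.exp_add, Real.exp_le_exp, hslope]
  linarith

theorem weight_stability_estimate_general {α δ x₁ : ℝ} (hα : 0 ≤ α) (hδ : 0 < δ)
    (hx : δ ^ (1 / (α + 1)) ≤ x₁ - δ) :
    Real.exp (-x₁ ^ (-α)) ≤ Real.exp α * Real.exp (-(x₁ - δ) ^ (-α)) := by
  have hy : 0 < x₁ - δ := (Real.rpow_pos_of_pos hδ _).trans_le hx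
  have hδy : δ ≤ (x₁ - δ) ^ (α + 1) := by
    rwa [one_div, Real.rpow_inv_le_iff_of_pos hδ.le hy.le (by positivity)] at hx
  have hexponent : α * (δ / (x₁ - δ) ^ (α + 1)) ≤ α :=
    mul_le_of_le_one_right hα (div_le_one_of_le₀ hδy (by positivity))
  calc Real.exp (-x₁ ^ (-α))
      ≤ Real.exp (α * ((x₁ - (x₁ - δ)) / (x₁ - δ) ^ (α + 1))) * Real.exp (-(x₁ - δ) ^ (-α)) :=
        exp_neg_rpow_neg_le_exp_mul_exp_neg_rpow_neg (by linarith) hy hα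
    _ ≤ Real.exp α * Real.exp (-(x₁ - δ) ^ (-α)) := by
        rw [sub_sub_cancel]; gcongr

/-- For `α > 0` and `a(s) := exp(−s^{−α})`, one has
`a(x₁) ≤ exp(α) · a(x₁ − δ)` for all `δ ∈ (0, 1/2]` and all `x₁ > 2 δ^{1/(α+1)}`
(i.e. the constant `C = exp(α)`, depending only on `α`, works). -/
theorem weight_stability_estimate (α : ℝ) (hα : 0 < α) :
    ∀ δ : ℝ, 0 < δ → δ ≤ 1 / 2 → ∀ x₁ : ℝ, 2 * δ ^ (1 / (α + 1)) < x₁ →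
      Real.exp (-x₁ ^ (-α)) ≤ Real.exp α * Real.exp (-(x₁ - δ) ^ (-α)) := by
  intro δ hδ hδ_half x₁ hx
  have hδ_le : δ ≤ δ ^ (1 / (α + 1)) :=
    Real.self_le_rpow_of_le_one hδ.le (by linarith) (div_le_one_of_le₀ (by linarith) (by linarith))
  exact weight_stability_estimate_general hα.le hδ (by linarith)
end
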